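/- Let p > 0, 0 < δ < p, λ > 0, μ > 0, q > 0, r > 0, β > 0. Let V : [0,∞) → ℝ be the explicit Parisian refracted scale function of the Cramér–Lundberg model, V(x) = e^{qr}(p−δ)𝕎^{(q)}(x) − (1/(μλ))[(q+λ)𝕎^{(q)}(x) − (p−δ)𝕎^{(q)′}(x)][(q+λ)e^{qr} − p·C], where C is the explicit constant C = e^{−λr}[ p W^{(q)′}(pr) + A⁻ q⁺(q) e^{q⁺(q)pr} Σ_{m=0}^∞ ((pr(q⁻(q)+μ))^m/(m!(m+1)!)) γ(m+1, (q⁺(q)+μ)pr) (pr(q⁺(q)+μ) − (m+1)) − A⁺ q⁻(q) e^{q⁻(q)pr} Σ_{m=0}^∞ ((pr(q⁺(q)+μ))^m/(m!(m+1)!)) γ(m+1, (q⁻(q)+μ)pr) (pr(q⁻(q)+μ) − (m+1)) + (e^{−μpr}/(pr)) Σ_{m=0}^∞ ((pλμr²)^{m+1}/(m!(m+1)!)) ]. Define g(c₁,c₂) = (V(c₂) − V(c₁))/(c₂ − c₁ − β) on dom(g) = {(c₁,c₂) : c₁ ≥ 0, c₂ > c₁ + β}. Then g attains its infimum on dom(g),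 and every minimizer (c₁*, c₂*) satisfies V′(c₂*) = (V(c₂*) − V(c₁*))/(c₂* − c₁* − β); moreover either V′(c₁*) = V′(c₂*) or c₁* = 0. -/

import Mathlib

open MeasureTheory

/- Cramér–Lundberg model: X_t = pt − Σ_{i≤N_t}U_i with Poisson(λ) arrivals and
   Exp(μ) claims; Y_t = X_t − δt.  V is the explicit Parisian refracted scale
   function and g the cost ratio of the impulse (c₁,c₂) policy with
   transaction cost β.  The claim: g attains its infimum on
   dom(g) = {c₁ ≥ 0, c₂ > c₁ + β}, and every minimizer (c₁*,c₂*) satisfies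
   V′(c₂*) = (V(c₂*) − V(c₁*))/(c₂* − c₁* − β), and moreover either
   V′(c₁*) = V′(c₂*) or c₁* = 0. -/

noncomputable def qp (p lam μ q : ℝ) : ℝ :=
  (q + lam - μ * p + Real.sqrt ((q + lam - μ * p) ^ 2 + 4 * p * q * μ)) / (2 * p)

noncomputable def qm (p lam μ q : ℝ) : ℝ :=
  (q + lam - μ * p - Real.sqrt ((q + lam - μ * p) ^ 2 + 4 * p * q * μ)) / (2 * p)

noncomputable def Ap (p lam μ q : ℝ) : ℝ := (μ + qp p lam μ q) / (qp p lam μ q - qm p lam μ q)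

noncomputable def Am (p lam μ q : ℝ) : ℝ := (μ + qm p lam μ q) / (qp p lam μ q - qm p lam μ q)

/-- The q-scale function W^{(q)} of X (its formula on [0,∞)). -/
noncomputable def Wq (p lam μ q x : ℝ) : ℝ :=
  1 / p * (Ap p lam μ q * Real.exp (qp p lam μ q * x) -
    Am p lam μ q * Real.exp (qm p lam μ q * x))

/-- The q-scale function 𝕎^{(q)} of Y (its formula on [0,∞)). -/
noncomputable def WWq (p δ lam μ q x : ℝ) : ℝ := Wq (p - δ) lam μ q x

/-- Lower incomplete gamma function γ(a,x) = ∫₀ˣ t^{a−1}e^{−t} dt. -/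
noncomputable def lowerGamma (a x : ℝ) : ℝ :=
  ∫ t in (0 : ℝ)..x, t ^ (a - 1) * Real.exp (-t)

/-- The explicit constant C. -/
noncomputable def Cconst (p lam μ q r : ℝ) : ℝ :=
  Real.exp (-lam * r) *
    (p * deriv (Wq p lam μ q) (p * r) +
      Am p lam μ q * qp p lam μ q * Real.exp (qp p lam μ q * (p * r)) *
        (∑' m : ℕ, (p * r * (qm p lam μ q + μ)) ^ m /
            ((Nat.factorial m : ℝ) * (Nat.factorial (m + 1) : ℝ)) *
          lowerGamma ((m : ℝ) + 1) ((qp p lam μ q + μ) * (p * r)) *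
          (p * r * (qp p lam μ q + μ) - ((m : ℝ) + 1))) -
      Ap p lam μ q * qm p lam μ q * Real.exp (qm p lam μ q * (p * r)) *
        (∑' m : ℕ, (p * r * (qp p lam μ q + μ)) ^ m /
            ((Nat.factorial m : ℝ) * (Nat.factorial (m + 1) : ℝ)) *
          lowerGamma ((m : ℝ) + 1) ((qm p lam μ q + μ) * (p * r)) *
          (p * r * (qm p lam μ q + μ) - ((m : ℝ) + 1))) +
      Real.exp (-μ * (p * r)) / (p * r) *
        (∑' m : ℕ, (p * lam * μ * r ^ 2) ^ (m + 1) /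
          ((Nat.factorial m : ℝ) * (Nat.factorial (m + 1) : ℝ))))

/-- The explicit Parisian refracted scale function V^{(q)} on [0,∞) for the
Cramér–Lundberg model. -/
noncomputable def Vq (p δ lam μ q r x : ℝ) : ℝ :=
  Real.exp (q * r) * (p - δ) * WWq p δ lam μ q x -
    1 / (μ * lam) *
      ((q + lam) * WWq p δ lam μ q x - (p - δ) * deriv (WWq p δ lam μ q) x) *
      ((q + lam) * Real.exp (q * r) - p * Cconst p lam μ q r)

/-- The cost-ratio function g of the impulse (c₁,c₂) policy. -/
noncomputable def gfun (p δ lam μ q r β c₁ c₂ : ℝ) : ℝ :=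
  (Vq p δ lam μ q r c₂ - Vq p δ lam μ q r c₁) / (c₂ - c₁ - β)

/-! Let `S` be the solution of `p S'' = (q + λ - μp) S' + qμ S` with `S(0) = 0`, `S'(0) = 1/p`; its
characteristic roots are `q⁺ > 0 > q⁻`. The scale function is `W = S' + μS`, and the equation for
`S` turns into `(q + λ) W - p W' = λμ S`. With `p - δ` in place of `p`, this identity collapses the
derivative of `V` to `V' = qμ e^{qr} S + p C S'`.

The constant `C` is nonnegative: its first summand `p W'(pr)` is positive, and since
`(x - a) γ(a, x) + x^a e^{-x} = ∫₀ˣ (x - t) t^{a-1} e^{-t} dt ≥ 0`, both incomplete gamma series are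
bounded below by multiples of `∑ z^m / (m! (m+1)!)`; these lower bounds cancel exactly against the
last series in `C`. Hence `V` is strictly increasing on `[0, ∞)` and `V' → ∞`. For such a function
the sublevel sets of the cost ratio lie in compact subsets of its domain, and at a minimizer the
partial derivatives vanish, except possibly the first one when `c₁ = 0`. -/

section CostRatio

open Set Filter

/-- The set of impulse policies `(c₁, c₂)`, encoded as pairs, on which the cost ratio with
transaction cost `β` is considered. -/
def impulseDomain (β : ℝ) : Set (ℝ × ℝ) := {c | 0 ≤ c.1 ∧ c.1 + β < c.2}

/-- The cost ratio of the impulse policy `c = (c₁, c₂)` for an arbitrary function `V` in place of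
the Parisian refracted scale function. -/
noncomputable def costRatio (V : ℝ → ℝ) (β : ℝ) (c : ℝ × ℝ) : ℝ :=
  (V c.2 - V c.1) / (c.2 - c.1 - β)

variable {V : ℝ → ℝ} {V' β c₁ c₂ G : ℝ} {c : ℝ × ℝ}

lemma sub_sub_pos_of_mem_impulseDomain (hc : c ∈ impulseDomain β) : 0 < c.2 - c.1 - β := by
  linarith [hc.2]

lemma costRatio_pos (hβ : 0 ≤ β) (hmono : StrictMonoOn V (Ici 0)) (hc : c ∈ impulseDomain β) :
    0 < costRatio V β c := by
  have hlt : c.1 < c.2 := by linarith [hc.2]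
  exact div_pos (sub_pos.2 (hmono hc.1 (hc.1.trans hlt.le) hlt))
    (sub_sub_pos_of_mem_impulseDomain hc)

lemma continuousOn_costRatio (hβ : 0 ≤ β) (hcont : ContinuousOn V (Ici 0)) :
    ContinuousOn (costRatio V β) (impulseDomain β) := by
  refine ContinuousOn.div (.sub (hcont.comp continuousOn_snd fun c hc => ?_)
    (hcont.comp continuousOn_fst fun c hc => hc.1)) (by fun_prop)
    fun c hc => (sub_sub_pos_of_mem_impulseDomain hc).ne'
  exact mem_Ici.2 (by linarith [hc.1, hc.2])

lemma eventually_forall_mul_sub_le_sub (htop : Tendsto (deriv V) atTop atTop) (K : ℝ) :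
    ∀ᶠ M in atTop, ∀ x y, M ≤ x → x ≤ y → K * (y - x) ≤ V y - V x := by
  obtain ⟨M₀, hM₀⟩ := eventually_atTop.1
    ((htop.eventually_ge_atTop K).and (htop.eventually_gt_atTop 0))
  filter_upwards [eventually_ge_atTop M₀] with M hM x y hx hxy
  have hdiff : DifferentiableOn ℝ V (Ici M₀) := fun z hz =>
    (differentiableAt_of_deriv_ne_zero (hM₀ z hz).2.ne').differentiableWithinAt
  exact (convex_Ici M₀).mul_sub_le_image_sub_of_le_deriv hdiff.continuousOn
    (hdiff.mono interior_subset) (fun z hz => (hM₀ z (interior_subset hz)).1)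
    x (hM.trans hx) y (hM.trans (hx.trans hxy)) hxy

lemma exists_isCompact_costRatio_sublevel_subset (hβ : 0 < β) (hcont : ContinuousOn V (Ici 0))
    (hmono : StrictMonoOn V (Ici 0)) (htop : Tendsto (deriv V) atTop atTop) (hG : 0 < G) :
    ∃ K ⊆ impulseDomain β, IsCompact K ∧ ∀ c ∈ impulseDomain β, costRatio V β c ≤ G → c ∈ K := by
  obtain ⟨M, hgrowth, hM⟩ :=
    ((eventually_forall_mul_sub_le_sub htop (G + 1)).and (eventually_ge_atTop 0)).exists
  obtain ⟨η, hη, hgap⟩ : ∃ η, 0 < η ∧ ∀ x ∈ Icc 0 M, η ≤ V (x + β) - V x :=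
    isCompact_Icc.exists_forall_le'
      ((hcont.comp (by fun_prop) fun x hx => add_nonneg hx.1 hβ.le).sub
        (hcont.mono Icc_subset_Ici_self))
      fun x hx => sub_pos.2 (hmono hx.1 (add_nonneg hx.1 hβ.le) (lt_add_of_pos_right x hβ))
  have hηG : 0 < η / G := div_pos hη hG
  refine ⟨(Icc 0 M ×ˢ Icc 0 ((G + 1) * M)) ∩ {c | c.1 + β + η / G ≤ c.2},
    fun c hc => ⟨hc.1.1.1, ?_⟩, (isCompact_Icc.prod isCompact_Icc).inter_right
      (isClosed_le (by fun_prop) (by fun_prop)), fun c hc hle => ?_⟩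
  · exact (lt_add_of_pos_right _ hηG).trans_le hc.2
  obtain ⟨h₁, h₂⟩ := hc
  have hincr : V c.2 - V c.1 ≤ G * (c.2 - c.1 - β) :=
    (div_le_iff₀ (sub_sub_pos_of_mem_impulseDomain ⟨h₁, h₂⟩)).1 hle
  have hfst : c.1 ≤ M := by
    by_contra! hlt
    nlinarith [hgrowth c.1 c.2 hlt.le (by linarith)]
  have hsep : c.1 + β + η / G ≤ c.2 := by
    have hV : V (c.1 + β) < V c.2 :=
      hmono (add_nonneg h₁ hβ.le) (mem_Ici.2 (by linarith)) h₂
    have hη_le : η / G ≤ c.2 - c.1 - β := by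
      rw [div_le_iff₀' hG]
      linarith [hgap c.1 ⟨h₁, hfst⟩]
    linarith
  have hsnd : c.2 ≤ (G + 1) * M := by
    by_contra! hlt
    have hV : V c.1 ≤ V M := hmono.monotoneOn h₁ hM hfst
    nlinarith [hgrowth M c.2 le_rfl (by nlinarith)]
  exact ⟨⟨⟨h₁, hfst⟩, by linarith, hsnd⟩, hsep⟩

theorem exists_isMinOn_costRatio (hβ : 0 < β) (hcont : ContinuousOn V (Ici 0))
    (hmono : StrictMonoOn V (Ici 0)) (htop : Tendsto (deriv V) atTop atTop) :
    ∃ c ∈ impulseDomain β, IsMinOn (costRatio V β) (impulseDomain β) c := by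
  have hbase : ((0 : ℝ), β + 1) ∈ impulseDomain β := ⟨le_rfl, by simp⟩
  obtain ⟨K, hKdom, hK, hsub⟩ := exists_isCompact_costRatio_sublevel_subset hβ hcont hmono htop
    (costRatio_pos hβ.le hmono hbase)
  have hbaseK := hsub _ hbase le_rfl
  obtain ⟨c, hc, hmin⟩ := hK.exists_isMinOn ⟨_, hbaseK⟩
    ((continuousOn_costRatio hβ.le hcont).mono hKdom)
  refine ⟨c, hKdom hc, fun d hd => ?_⟩
  rcases le_total (costRatio V β d) (costRatio V β (0, β + 1)) with hle | hge
  · exact hmin (hsub d hd hle)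
  · exact (hmin hbaseK).trans hge

lemma hasDerivAt_costRatio_fst (hV : HasDerivAt V V' c₁) (hc : c₂ - c₁ - β ≠ 0) :
    HasDerivAt (fun x => costRatio V β (x, c₂))
      ((costRatio V β (c₁, c₂) - V') / (c₂ - c₁ - β)) c₁ := by
  have hden := ((hasDerivAt_id c₁).const_sub c₂).sub_const β
  refine ((hV.const_sub (V c₂)).div hden hc).congr_deriv ?_
  simp only [costRatio, id]
  field_simp
  ring

lemma hasDerivAt_costRatio_snd (hV : HasDerivAt V V' c₂) (hc : c₂ - c₁ - β ≠ 0) :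
    HasDerivAt (fun y => costRatio V β (c₁, y))
      ((V' - costRatio V β (c₁, c₂)) / (c₂ - c₁ - β)) c₂ := by
  have hden := ((hasDerivAt_id c₂).sub_const c₁).sub_const β
  refine ((hV.sub_const (V c₁)).div hden hc).congr_deriv ?_
  simp only [costRatio, id]
  field_simp

theorem deriv_fst_eq_costRatio_of_isMinOn (hV : DifferentiableAt ℝ V c₁)
    (hc : (c₁, c₂) ∈ impulseDomain β) (hc₁ : 0 < c₁)
    (hmin : IsMinOn (costRatio V β) (impulseDomain β) (c₁, c₂)) :
    deriv V c₁ = costRatio V β (c₁, c₂) := by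
  have hne : c₂ - c₁ - β ≠ 0 := (sub_sub_pos_of_mem_impulseDomain hc).ne'
  have hloc : IsLocalMin (fun x => costRatio V β (x, c₂)) c₁ := by
    filter_upwards [lt_mem_nhds hc₁, gt_mem_nhds (lt_sub_iff_add_lt.2 hc.2)] with x hx hx'
    exact hmin (show (x, c₂) ∈ impulseDomain β from ⟨hx.le, lt_sub_iff_add_lt.1 hx'⟩)
  have hzero := hloc.hasDerivAt_eq_zero (hasDerivAt_costRatio_fst hV.hasDerivAt hne)
  exact (sub_eq_zero.1 ((div_eq_zero_iff.1 hzero).resolve_right hne)).symm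

theorem deriv_snd_eq_costRatio_of_isMinOn (hV : DifferentiableAt ℝ V c₂)
    (hc : (c₁, c₂) ∈ impulseDomain β)
    (hmin : IsMinOn (costRatio V β) (impulseDomain β) (c₁, c₂)) :
    deriv V c₂ = costRatio V β (c₁, c₂) := by
  have hne : c₂ - c₁ - β ≠ 0 := (sub_sub_pos_of_mem_impulseDomain hc).ne'
  have hloc : IsLocalMin (fun y => costRatio V β (c₁, y)) c₂ := by
    filter_upwards [lt_mem_nhds hc.2] with y hy
    exact hmin (show (c₁, y) ∈ impulseDomain β from ⟨hc.1, hy⟩)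
  have hzero := hloc.hasDerivAt_eq_zero (hasDerivAt_costRatio_snd hV.hasDerivAt hne)
  exact sub_eq_zero.1 ((div_eq_zero_iff.1 hzero).resolve_right hne)

end CostRatio

section IncompleteGamma

open Set Real
open scoped Nat

variable {a x z : ℝ}

lemma intervalIntegrable_rpow_mul_exp_neg (ha : 0 < a) :
    IntervalIntegrable (fun t : ℝ => t ^ (a - 1) * exp (-t)) volume 0 x :=
  (intervalIntegral.intervalIntegrable_rpow' (by linarith)).mul_continuousOn (by fun_prop)

lemma lowerGamma_nonneg (hx : 0 ≤ x) : 0 ≤ lowerGamma a x :=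
  intervalIntegral.integral_nonneg hx fun _ ht => mul_nonneg (rpow_nonneg ht.1 _) (exp_pos _).le

lemma lowerGamma_le_rpow_div (ha : 0 < a) (hx : 0 ≤ x) : lowerGamma a x ≤ x ^ a / a := by
  calc lowerGamma a x ≤ ∫ t in (0 : ℝ)..x, t ^ (a - 1) :=
        intervalIntegral.integral_mono_on hx (intervalIntegrable_rpow_mul_exp_neg ha)
          (intervalIntegral.intervalIntegrable_rpow' (by linarith)) fun t ht =>
            mul_le_of_le_one_right (rpow_nonneg ht.1 _) (exp_le_one_iff.2 (neg_nonpos.2 ht.1))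
    _ = x ^ a / a := by
        rw [integral_rpow (Or.inl (by linarith)), sub_add_cancel, zero_rpow ha.ne', sub_zero]

lemma lowerGamma_add_one (ha : 0 < a) (hx : 0 ≤ x) :
    lowerGamma (a + 1) x = a * lowerGamma a x - x ^ a * exp (-x) := by
  have hint := intervalIntegrable_rpow_mul_exp_neg (x := x) ha
  have hint' := intervalIntegrable_rpow_mul_exp_neg (x := x) (add_pos ha one_pos)
  have hcont : ContinuousOn (fun t : ℝ => t ^ a * exp (-t)) (Icc 0 x) :=
    ((continuous_rpow_const ha.le).mul (by fun_prop)).continuousOn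
  have hderiv : ∀ t ∈ Ioo 0 x, HasDerivAt (fun t : ℝ => t ^ a * exp (-t))
      (a * (t ^ (a - 1) * exp (-t)) - t ^ (a + 1 - 1) * exp (-t)) t := fun t ht => by
    refine ((hasDerivAt_rpow_const (Or.inl ht.1.ne')).mul
      (hasDerivAt_neg t).exp).congr_deriv ?_
    rw [add_sub_cancel_right]
    ring
  have hFTC := intervalIntegral.integral_eq_sub_of_hasDerivAt_of_le hx hcont hderiv
    ((hint.const_mul a).sub hint')
  rw [intervalIntegral.integral_sub (hint.const_mul a) hint', intervalIntegral.integral_const_mul,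
    zero_rpow ha.ne', zero_mul, sub_zero] at hFTC
  rw [← hFTC, lowerGamma, lowerGamma]
  ring

lemma lowerGamma_add_one_le (ha : 0 < a) (hx : 0 ≤ x) :
    lowerGamma (a + 1) x ≤ x * lowerGamma a x := by
  rw [lowerGamma, lowerGamma, ← intervalIntegral.integral_const_mul]
  refine intervalIntegral.integral_mono_on_of_le_Ioo hx
    (intervalIntegrable_rpow_mul_exp_neg (add_pos ha one_pos))
    ((intervalIntegrable_rpow_mul_exp_neg ha).const_mul x) fun t ht => ?_
  calc t ^ (a + 1 - 1) * exp (-t) = t * (t ^ (a - 1) * exp (-t)) := by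
        rw [add_sub_right_comm, rpow_add_one ht.1.ne']
        ring
    _ ≤ x * (t ^ (a - 1) * exp (-t)) :=
        mul_le_mul_of_nonneg_right ht.2.le (mul_nonneg (rpow_nonneg ht.1.le _) (exp_pos _).le)

lemma neg_rpow_mul_exp_neg_le_lowerGamma_mul_sub (ha : 0 < a) (hx : 0 ≤ x) :
    -(x ^ a * exp (-x)) ≤ lowerGamma a x * (x - a) := by
  linarith [lowerGamma_add_one ha hx, lowerGamma_add_one_le ha hx]

lemma abs_lowerGamma_mul_sub_le (ha : 1 ≤ a) (hx : 0 ≤ x) :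
    |lowerGamma a x * (x - a)| ≤ x ^ a * (x + 1) := by
  have ha₀ : 0 < a := one_pos.trans_le ha
  have hdist : |x - a| ≤ a * (x + 1) := by
    rw [abs_le]
    constructor <;> nlinarith
  calc |lowerGamma a x * (x - a)| = lowerGamma a x * |x - a| := by
        rw [abs_mul, abs_of_nonneg (lowerGamma_nonneg hx)]
    _ ≤ x ^ a / a * (a * (x + 1)) := by
        gcongr
        exact lowerGamma_le_rpow_div ha₀ hx
    _ = x ^ a * (x + 1) := by field_simp

/-- The series `∑ zᵐ / (m! (m+1)!)`, i.e. `I₁(2√z) / √z` for the modified Bessel function `I₁`.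
It is the common scale on which the three series in `Cconst` are compared. -/
noncomputable def besselSeries (z : ℝ) : ℝ := ∑' m : ℕ, z ^ m / (m ! * (m + 1)! : ℝ)

/-- The incomplete gamma series occurring twice in `Cconst`, once for each order of the roots
`q⁺` and `q⁻`. -/
noncomputable def gammaSeries (z x : ℝ) : ℝ :=
  ∑' m : ℕ, z ^ m / (m ! * (m + 1)! : ℝ) * lowerGamma (m + 1) x * (x - (m + 1))

lemma summable_besselSeries (z : ℝ) : Summable fun m : ℕ => z ^ m / (m ! * (m + 1)! : ℝ) := by
  refine .of_norm_bounded (summable_pow_div_factorial |z|) fun m => ?_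
  rw [norm_div, norm_pow, norm_of_nonneg (by positivity : (0 : ℝ) ≤ m ! * _), norm_eq_abs]
  gcongr
  exact le_mul_of_one_le_right (by positivity) (mod_cast Nat.factorial_pos (m + 1))

lemma tsum_pow_succ_div_factorial (z : ℝ) :
    ∑' m : ℕ, z ^ (m + 1) / (m ! * (m + 1)! : ℝ) = z * besselSeries z := by
  rw [besselSeries, ← tsum_mul_left]
  exact tsum_congr fun m => by ring

lemma summable_gammaSeries (z : ℝ) (hx : 0 ≤ x) : Summable fun m : ℕ =>
    z ^ m / (m ! * (m + 1)! : ℝ) * lowerGamma (m + 1) x * (x - (m + 1)) := by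
  refine .of_norm_bounded ((summable_besselSeries (|z| * x)).mul_left (x * (x + 1))) fun m => ?_
  have hterm := abs_lowerGamma_mul_sub_le (a := m + 1) (by simp) hx
  rw [mul_assoc, norm_mul, norm_div, norm_pow, norm_of_nonneg (by positivity : (0 : ℝ) ≤ m ! * _),
    norm_eq_abs, norm_eq_abs]
  calc |z| ^ m / (m ! * (m + 1)! : ℝ) * |lowerGamma (m + 1) x * (x - (m + 1))|
      ≤ |z| ^ m / (m ! * (m + 1)! : ℝ) * (x ^ (m + 1 : ℝ) * (x + 1)) := by gcongr
    _ = x * (x + 1) * ((|z| * x) ^ m / (m ! * (m + 1)! : ℝ)) := by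
        norm_cast
        ring

lemma neg_mul_besselSeries_le_gammaSeries (hz : 0 ≤ z) (hx : 0 ≤ x) :
    -(x * exp (-x) * besselSeries (z * x)) ≤ gammaSeries z x := by
  rw [besselSeries, ← tsum_mul_left, ← tsum_neg]
  refine Summable.tsum_le_tsum (fun m => ?_)
    ((summable_besselSeries (z * x)).mul_left (x * exp (-x))).neg (summable_gammaSeries z hx)
  have hterm := neg_rpow_mul_exp_neg_le_lowerGamma_mul_sub (a := m + 1) (by positivity) hx
  calc -(x * exp (-x) * ((z * x) ^ m / (m ! * (m + 1)! : ℝ)))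
      = z ^ m / (m ! * (m + 1)! : ℝ) * -(x ^ (m + 1 : ℝ) * exp (-x)) := by
        norm_cast
        ring
    _ ≤ z ^ m / (m ! * (m + 1)! : ℝ) * (lowerGamma (m + 1) x * (x - (m + 1))) := by gcongr
    _ = z ^ m / (m ! * (m + 1)! : ℝ) * lowerGamma (m + 1) x * (x - (m + 1)) := by
        rw [mul_assoc]

end IncompleteGamma

section ScaleFunction

open Set Filter Real

variable {p δ lam μ q r x L : ℝ}

lemma abs_lt_sqrt_discrim (hp : 0 < p) (hμ : 0 < μ) (hq : 0 < q) :
    |q + lam - μ * p| < √((q + lam - μ * p) ^ 2 + 4 * p * q * μ) := by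
  rw [← sqrt_sq_eq_abs]
  exact sqrt_lt_sqrt (sq_nonneg _) (lt_add_of_pos_right _ (by positivity))

lemma qp_pos (hp : 0 < p) (hμ : 0 < μ) (hq : 0 < q) : 0 < qp p lam μ q :=
  div_pos (by linarith [(abs_lt.1 (abs_lt_sqrt_discrim (lam := lam) hp hμ hq)).1]) (by linarith)

lemma qm_neg (hp : 0 < p) (hμ : 0 < μ) (hq : 0 < q) : qm p lam μ q < 0 :=
  div_neg_of_neg_of_pos
    (by linarith [(abs_lt.1 (abs_lt_sqrt_discrim (lam := lam) hp hμ hq)).2]) (by linarith)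

lemma qm_lt_qp (hp : 0 < p) (hμ : 0 < μ) (hq : 0 < q) : qm p lam μ q < qp p lam μ q :=
  (qm_neg hp hμ hq).trans (qp_pos hp hμ hq)

lemma mul_qp_add_qm (hp : p ≠ 0) : p * (qp p lam μ q + qm p lam μ q) = q + lam - μ * p := by
  simp only [qp, qm]
  field_simp
  ring

lemma mul_qp_mul_qm (hp : 0 < p) (hμ : 0 < μ) (hq : 0 < q) :
    p * (qp p lam μ q * qm p lam μ q) = -(q * μ) := by
  have hsq := sq_sqrt (by positivity : 0 ≤ (q + lam - μ * p) ^ 2 + 4 * p * q * μ)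
  simp only [qp, qm]
  generalize √_ = d at hsq ⊢
  field_simp
  linear_combination -hsq

lemma mul_qp_sq (hp : 0 < p) (hμ : 0 < μ) (hq : 0 < q) :
    p * qp p lam μ q ^ 2 = (q + lam - μ * p) * qp p lam μ q + q * μ := by
  linear_combination
    qp p lam μ q * mul_qp_add_qm (lam := lam) (μ := μ) (q := q) hp.ne' - mul_qp_mul_qm hp hμ hq

lemma mul_qm_sq (hp : 0 < p) (hμ : 0 < μ) (hq : 0 < q) :
    p * qm p lam μ q ^ 2 = (q + lam - μ * p) * qm p lam μ q + q * μ := by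
  linear_combination
    qm p lam μ q * mul_qp_add_qm (lam := lam) (μ := μ) (q := q) hp.ne' - mul_qp_mul_qm hp hμ hq

lemma mul_qm_add_mul_qp_add (hp : 0 < p) (hμ : 0 < μ) (hq : 0 < q) :
    p * ((qm p lam μ q + μ) * (qp p lam μ q + μ)) = lam * μ := by
  linear_combination mul_qp_mul_qm (lam := lam) hp hμ hq +
    μ * mul_qp_add_qm (lam := lam) (μ := μ) (q := q) hp.ne'

lemma qm_add_pos (hp : 0 < p) (hlam : 0 < lam) (hμ : 0 < μ) (hq : 0 < q) :
    0 < qm p lam μ q + μ := by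
  have hprod : 0 < (qm p lam μ q + μ) * (qp p lam μ q + μ) := by
    refine pos_of_mul_pos_right ?_ hp.le
    rw [mul_qm_add_mul_qp_add hp hμ hq]
    positivity
  exact pos_of_mul_pos_left hprod (add_pos (qp_pos hp hμ hq) hμ).le

/-- The `n`-th derivative of the solution `S` of `p S'' = (q + λ - μp) S' + qμ S` with `S(0) = 0`
and `S'(0) = 1/p`, in terms of which both `Wq` and `Vq` are expressed. Indexing by `n` puts the
differential equation and all derivatives in algebraic form. -/
noncomputable def lundbergSol (p lam μ q : ℝ) (n : ℕ) (x : ℝ) : ℝ :=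
  (qp p lam μ q ^ n * exp (qp p lam μ q * x) - qm p lam μ q ^ n * exp (qm p lam μ q * x)) /
    (p * (qp p lam μ q - qm p lam μ q))

lemma hasDerivAt_lundbergSol (n : ℕ) (x : ℝ) :
    HasDerivAt (lundbergSol p lam μ q n) (lundbergSol p lam μ q (n + 1) x) x := by
  have hexp (s : ℝ) : HasDerivAt (fun y => s ^ n * exp (s * y)) (s ^ (n + 1) * exp (s * x)) x :=
    (((hasDerivAt_id x).const_mul s).exp.const_mul (s ^ n)).congr_deriv (by rw [id]; ring)
  exact ((hexp _).sub (hexp _)).div_const _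

lemma mul_lundbergSol_two (hp : 0 < p) (hμ : 0 < μ) (hq : 0 < q) (x : ℝ) :
    p * lundbergSol p lam μ q 2 x =
      (q + lam - μ * p) * lundbergSol p lam μ q 1 x + q * μ * lundbergSol p lam μ q 0 x := by
  simp only [lundbergSol]
  rw [← mul_div_assoc, ← mul_div_assoc, ← mul_div_assoc, ← add_div]
  congr 1
  linear_combination exp (qp p lam μ q * x) * mul_qp_sq (lam := lam) hp hμ hq -
    exp (qm p lam μ q * x) * mul_qm_sq (lam := lam) hp hμ hq

lemma lundbergSol_denom_pos (hp : 0 < p) (hμ : 0 < μ) (hq : 0 < q) :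
    0 < p * (qp p lam μ q - qm p lam μ q) :=
  mul_pos hp (sub_pos.2 (qm_lt_qp hp hμ hq))

lemma lundbergSol_zero_pos (hp : 0 < p) (hμ : 0 < μ) (hq : 0 < q) (hx : 0 < x) :
    0 < lundbergSol p lam μ q 0 x := by
  refine div_pos ?_ (lundbergSol_denom_pos hp hμ hq)
  simpa using mul_lt_mul_of_pos_right (qm_lt_qp hp hμ hq) hx

lemma lundbergSol_one_pos (hp : 0 < p) (hμ : 0 < μ) (hq : 0 < q) (x : ℝ) :
    0 < lundbergSol p lam μ q 1 x := by
  refine div_pos ?_ (lundbergSol_denom_pos hp hμ hq)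
  simp only [pow_one]
  linarith [mul_pos (qp_pos (lam := lam) hp hμ hq) (exp_pos (qp p lam μ q * x)),
    mul_neg_of_neg_of_pos (qm_neg (lam := lam) hp hμ hq) (exp_pos (qm p lam μ q * x))]

lemma tendsto_lundbergSol_zero (hp : 0 < p) (hμ : 0 < μ) (hq : 0 < q) :
    Tendsto (lundbergSol p lam μ q 0) atTop atTop := by
  have hplus : Tendsto (fun x => exp (qp p lam μ q * x)) atTop atTop :=
    tendsto_exp_atTop.comp (tendsto_id.const_mul_atTop (qp_pos hp hμ hq))
  have hminus : Tendsto (fun x => exp (qm p lam μ q * x)) atTop (nhds 0) :=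
    tendsto_exp_atBot.comp (tendsto_id.const_mul_atTop_of_neg (qm_neg hp hμ hq))
  refine Tendsto.atTop_div_const (lundbergSol_denom_pos hp hμ hq) ?_
  simpa [sub_eq_add_neg] using hplus.atTop_add hminus.neg

lemma Wq_eq_lundbergSol (p lam μ q x : ℝ) :
    Wq p lam μ q x = lundbergSol p lam μ q 1 x + μ * lundbergSol p lam μ q 0 x := by
  simp only [Wq, Ap, Am, lundbergSol, ← div_div]
  ring

lemma deriv_Wq (p lam μ q x : ℝ) :
    deriv (Wq p lam μ q) x = lundbergSol p lam μ q 2 x + μ * lundbergSol p lam μ q 1 x := by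
  rw [funext (Wq_eq_lundbergSol p lam μ q)]
  exact ((hasDerivAt_lundbergSol 1 x).add ((hasDerivAt_lundbergSol 0 x).const_mul μ)).deriv

lemma mul_Wq_sub_mul_deriv_Wq (hp : 0 < p) (hμ : 0 < μ) (hq : 0 < q) (x : ℝ) :
    (q + lam) * Wq p lam μ q x - p * deriv (Wq p lam μ q) x =
      lam * μ * lundbergSol p lam μ q 0 x := by
  rw [Wq_eq_lundbergSol, deriv_Wq]
  linear_combination -mul_lundbergSol_two hp hμ hq x

lemma deriv_Wq_pos (hp : 0 < p) (hlam : 0 < lam) (hμ : 0 < μ) (hq : 0 < q) (hx : 0 < x) :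
    0 < deriv (Wq p lam μ q) x := by
  have hS := lundbergSol_zero_pos (lam := lam) hp hμ hq hx
  have hS' := lundbergSol_one_pos (lam := lam) hp hμ hq x
  refine pos_of_mul_pos_right (a := p) ?_ hp.le
  calc 0 < (q + lam) * lundbergSol p lam μ q 1 x + q * μ * lundbergSol p lam μ q 0 x := by
        positivity
    _ = p * deriv (Wq p lam μ q) x := by
        rw [deriv_Wq]
        linear_combination -mul_lundbergSol_two hp hμ hq x

lemma Ap_pos (hp : 0 < p) (hμ : 0 < μ) (hq : 0 < q) : 0 < Ap p lam μ q :=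
  div_pos (add_pos hμ (qp_pos hp hμ hq)) (sub_pos.2 (qm_lt_qp hp hμ hq))

lemma Am_pos (hp : 0 < p) (hlam : 0 < lam) (hμ : 0 < μ) (hq : 0 < q) : 0 < Am p lam μ q :=
  div_pos (by linarith [qm_add_pos hp hlam hμ hq]) (sub_pos.2 (qm_lt_qp hp hμ hq))

lemma Am_mul_sub_Ap_mul (hp : 0 < p) (hμ : 0 < μ) (hq : 0 < q) :
    Am p lam μ q * qp p lam μ q * (qp p lam μ q + μ) -
      Ap p lam μ q * qm p lam μ q * (qm p lam μ q + μ) =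
    (qm p lam μ q + μ) * (qp p lam μ q + μ) := by
  have hne : qp p lam μ q - qm p lam μ q ≠ 0 := (sub_pos.2 (qm_lt_qp hp hμ hq)).ne'
  simp only [Ap, Am]
  field_simp
  ring

/-- The part of `Cconst` made up of the three series, as a function of `L = pr`. The arguments are
grouped so that both incomplete gamma series are compared with the same `besselSeries`. -/
noncomputable def seriesPart (p lam μ q L : ℝ) : ℝ :=
  Am p lam μ q * qp p lam μ q * exp (qp p lam μ q * L) *
      gammaSeries (L * (qm p lam μ q + μ)) (L * (qp p lam μ q + μ)) -
    Ap p lam μ q * qm p lam μ q * exp (qm p lam μ q * L) *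
      gammaSeries (L * (qp p lam μ q + μ)) (L * (qm p lam μ q + μ)) +
    exp (-μ * L) / L * (L * (qm p lam μ q + μ) * (L * (qp p lam μ q + μ)) *
      besselSeries (L * (qm p lam μ q + μ) * (L * (qp p lam μ q + μ))))

lemma Cconst_eq_seriesPart (hp : 0 < p) (hμ : 0 < μ) (hq : 0 < q) :
    Cconst p lam μ q r =
      exp (-lam * r) * (p * deriv (Wq p lam μ q) (p * r) + seriesPart p lam μ q (p * r)) := by
  have harg : p * r * (qm p lam μ q + μ) * (p * r * (qp p lam μ q + μ)) = p * lam * μ * r ^ 2 := by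
    linear_combination p * r ^ 2 * mul_qm_add_mul_qp_add (lam := lam) hp hμ hq
  rw [Cconst, seriesPart, harg, ← tsum_pow_succ_div_factorial, mul_comm (qp p lam μ q + μ),
    mul_comm (qm p lam μ q + μ)]
  simp only [gammaSeries]
  ring

lemma seriesPart_nonneg (hp : 0 < p) (hlam : 0 < lam) (hμ : 0 < μ) (hq : 0 < q) (hL : 0 < L) :
    0 ≤ seriesPart p lam μ q L := by
  have hqp := qp_pos (lam := lam) hp hμ hq
  have hqm := qm_neg (lam := lam) hp hμ hq
  have hAp := Ap_pos (lam := lam) hp hμ hq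
  have hAm := Am_pos hp hlam hμ hq
  have ha : 0 ≤ L * (qp p lam μ q + μ) := by positivity
  have hb : 0 ≤ L * (qm p lam μ q + μ) := mul_nonneg hL.le (qm_add_pos hp hlam hμ hq).le
  have hplus := neg_mul_besselSeries_le_gammaSeries hb ha
  have hminus := neg_mul_besselSeries_le_gammaSeries ha hb
  rw [mul_comm (L * (qp p lam μ q + μ)) (L * (qm p lam μ q + μ))] at hminus
  rw [seriesPart]
  generalize besselSeries _ = B at hplus hminus ⊢
  have hexp (s : ℝ) : exp (s * L) * exp (-(L * (s + μ))) = exp (-μ * L) := by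
    rw [← exp_add]
    ring_nf
  have hcancel : Am p lam μ q * qp p lam μ q * exp (qp p lam μ q * L) *
        (L * (qp p lam μ q + μ) * exp (-(L * (qp p lam μ q + μ))) * B) -
      Ap p lam μ q * qm p lam μ q * exp (qm p lam μ q * L) *
        (L * (qm p lam μ q + μ) * exp (-(L * (qm p lam μ q + μ))) * B) =
      exp (-μ * L) / L * (L * (qm p lam μ q + μ) * (L * (qp p lam μ q + μ)) * B) := by
    rw [div_mul_eq_mul_div, eq_div_iff hL.ne']
    linear_combination L ^ 2 * B * (Am p lam μ q * qp p lam μ q * (qp p lam μ q + μ) *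
        hexp (qp p lam μ q) - Ap p lam μ q * qm p lam μ q * (qm p lam μ q + μ) *
        hexp (qm p lam μ q) + exp (-μ * L) * Am_mul_sub_Ap_mul (lam := lam) hp hμ hq)
  have hplus' := mul_le_mul_of_nonneg_left hplus
    (by positivity : 0 ≤ Am p lam μ q * qp p lam μ q * exp (qp p lam μ q * L))
  have hminus' := mul_le_mul_of_nonneg_left hminus
    (mul_nonneg (mul_nonneg hAp.le (neg_nonneg.2 hqm.le)) (exp_pos (qm p lam μ q * L)).le)
  linarith

lemma Cconst_nonneg (hp : 0 < p) (hlam : 0 < lam) (hμ : 0 < μ) (hq : 0 < q) (hr : 0 < r) :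
    0 ≤ Cconst p lam μ q r := by
  have hpr : 0 < p * r := mul_pos hp hr
  rw [Cconst_eq_seriesPart hp hμ hq]
  exact mul_nonneg (exp_pos _).le (add_nonneg (mul_pos hp (deriv_Wq_pos hp hlam hμ hq hpr)).le
    (seriesPart_nonneg hp hlam hμ hq hpr))

lemma Vq_eq_lundbergSol (hδp : δ < p) (hlam : lam ≠ 0) (hμ : 0 < μ) (hq : 0 < q) (r x : ℝ) :
    Vq p δ lam μ q r x =
      exp (q * r) * ((p - δ) * lundbergSol (p - δ) lam μ q 1 x +
        (μ * (p - δ) - (q + lam)) * lundbergSol (p - δ) lam μ q 0 x) +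
      p * Cconst p lam μ q r * lundbergSol (p - δ) lam μ q 0 x := by
  have hconv := mul_Wq_sub_mul_deriv_Wq (lam := lam) (sub_pos.2 hδp) hμ hq x
  have hWW : WWq p δ lam μ q = Wq (p - δ) lam μ q := rfl
  rw [Vq, hWW, hconv, Wq_eq_lundbergSol]
  field_simp
  ring

lemma hasDerivAt_Vq (hδp : δ < p) (hlam : lam ≠ 0) (hμ : 0 < μ) (hq : 0 < q) (r x : ℝ) :
    HasDerivAt (Vq p δ lam μ q r)
      (q * μ * exp (q * r) * lundbergSol (p - δ) lam μ q 0 x +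
        p * Cconst p lam μ q r * lundbergSol (p - δ) lam μ q 1 x) x := by
  have hS := hasDerivAt_lundbergSol (p := p - δ) (lam := lam) (μ := μ) (q := q) 0 x
  have hS' := hasDerivAt_lundbergSol (p := p - δ) (lam := lam) (μ := μ) (q := q) 1 x
  rw [funext (Vq_eq_lundbergSol hδp hlam hμ hq r)]
  refine ((((hS'.const_mul _).add (hS.const_mul _)).const_mul _).add
    (hS.const_mul _)).congr_deriv ?_
  linear_combination exp (q * r) * mul_lundbergSol_two (lam := lam) (sub_pos.2 hδp) hμ hq x

lemma differentiable_Vq (hδp : δ < p) (hlam : lam ≠ 0) (hμ : 0 < μ) (hq : 0 < q) (r : ℝ) :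
    Differentiable ℝ (Vq p δ lam μ q r) := fun x =>
  (hasDerivAt_Vq hδp hlam hμ hq r x).differentiableAt

lemma mul_lundbergSol_le_deriv_Vq (hp : 0 < p) (hδp : δ < p) (hlam : 0 < lam) (hμ : 0 < μ)
    (hq : 0 < q) (hr : 0 < r) (x : ℝ) :
    q * μ * exp (q * r) * lundbergSol (p - δ) lam μ q 0 x ≤ deriv (Vq p δ lam μ q r) x := by
  rw [(hasDerivAt_Vq hδp hlam.ne' hμ hq r x).deriv]
  exact le_add_of_nonneg_right (mul_nonneg (mul_nonneg hp.le (Cconst_nonneg hp hlam hμ hq hr))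
    (lundbergSol_one_pos (sub_pos.2 hδp) hμ hq x).le)

lemma strictMonoOn_Vq (hp : 0 < p) (hδp : δ < p) (hlam : 0 < lam) (hμ : 0 < μ) (hq : 0 < q)
    (hr : 0 < r) : StrictMonoOn (Vq p δ lam μ q r) (Ici 0) := by
  refine strictMonoOn_of_deriv_pos (convex_Ici 0)
    (differentiable_Vq hδp hlam.ne' hμ hq r).continuous.continuousOn fun x hx => ?_
  rw [interior_Ici] at hx
  have hS := lundbergSol_zero_pos (lam := lam) (sub_pos.2 hδp) hμ hq hx
  exact (by positivity : 0 < q * μ * exp (q * r) * lundbergSol (p - δ) lam μ q 0 x).trans_le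
    (mul_lundbergSol_le_deriv_Vq hp hδp hlam hμ hq hr x)

lemma tendsto_deriv_Vq (hp : 0 < p) (hδp : δ < p) (hlam : 0 < lam) (hμ : 0 < μ) (hq : 0 < q)
    (hr : 0 < r) : Tendsto (deriv (Vq p δ lam μ q r)) atTop atTop :=
  tendsto_atTop_mono (mul_lundbergSol_le_deriv_Vq hp hδp hlam hμ hq hr)
    ((tendsto_lundbergSol_zero (sub_pos.2 hδp) hμ hq).const_mul_atTop (by positivity))

end ScaleFunction

theorem impulse_policy_first_order_conditions_CL (p δ lam μ q r β : ℝ)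
    (hp : 0 < p) (hδ : 0 < δ) (hδp : δ < p) (hlam : 0 < lam) (hμ : 0 < μ)
    (hq : 0 < q) (hr : 0 < r) (hβ : 0 < β) :
    (∃ c₁ c₂ : ℝ, 0 ≤ c₁ ∧ c₁ + β < c₂ ∧
      ∀ d₁ d₂ : ℝ, 0 ≤ d₁ → d₁ + β < d₂ →
        gfun p δ lam μ q r β c₁ c₂ ≤ gfun p δ lam μ q r β d₁ d₂) ∧
    ∀ c₁ c₂ : ℝ, 0 ≤ c₁ → c₁ + β < c₂ →
      (∀ d₁ d₂ : ℝ, 0 ≤ d₁ → d₁ + β < d₂ →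
        gfun p δ lam μ q r β c₁ c₂ ≤ gfun p δ lam μ q r β d₁ d₂) →
      deriv (Vq p δ lam μ q r) c₂
          = (Vq p δ lam μ q r c₂ - Vq p δ lam μ q r c₁) / (c₂ - c₁ - β) ∧
        (deriv (Vq p δ lam μ q r) c₁ = deriv (Vq p δ lam μ q r) c₂ ∨ c₁ = 0) := by
  have hdiff := differentiable_Vq hδp hlam.ne' hμ hq r
  refine ⟨?_, fun c₁ c₂ h₁ h₂ hle => ?_⟩
  · obtain ⟨c, hc, hmin⟩ := exists_isMinOn_costRatio hβ hdiff.continuous.continuousOn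
      (strictMonoOn_Vq hp hδp hlam hμ hq hr) (tendsto_deriv_Vq hp hδp hlam hμ hq hr)
    exact ⟨c.1, c.2, hc.1, hc.2, fun d₁ d₂ h₁ h₂ => isMinOn_iff.1 hmin (d₁, d₂) ⟨h₁, h₂⟩⟩
  · have hc : (c₁, c₂) ∈ impulseDomain β := ⟨h₁, h₂⟩
    have hmin : IsMinOn (costRatio (Vq p δ lam μ q r) β) (impulseDomain β) (c₁, c₂) :=
      fun d hd => hle d.1 d.2 hd.1 hd.2
    have hsnd := deriv_snd_eq_costRatio_of_isMinOn (hdiff c₂) hc hmin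
    refine ⟨hsnd, h₁.eq_or_lt.symm.imp (fun hpos => ?_) Eq.symm⟩
    rw [deriv_fst_eq_costRatio_of_isMinOn (hdiff c₁) hc hpos hmin, hsnd]
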